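/- arXiv:2410.07756 — 2 statements merged into one kernel-verified Lean document; each statement's English description precedes it below -/
import Mathlib

section
/- Let G = (V, E) be a finite simple connected loopless graph. For every subset A ⊆ E and every choice of edge weights c with 0 < c_e < ∞ for all e ∈ E, the relative resistances satisfy 0 ≤ ∑_{e ∈ A} r_e(c) ≤ |V| − k(A), where k(A) is the number of connected components of the spanning subgraph (V, A) of G with edge set A. -/
/-!
Contract the connected components of `(V, A)` in a spanning tree `T`. The quotient graph is
connected on `k(A)` vertices and all of its edges come from `T \ A`, so `k(A) - 1 ≤ |T \ A|`; as
`|T| = |V| - 1`, this says `|A ∩ T| ≤ |V| - k(A)`. Summing the relative resistances over `A` gives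
the expected size of `A ∩ T` for a random spanning tree `T` drawn with probability proportional to
`∏ t ∈ T, c t`, and averaging preserves the bounds.
-/

open scoped Classical

namespace RCurv

variable {V : Type*} [Fintype V] [DecidableEq V]

/-- `T` is (the edge set of) a spanning tree of `G`. -/
def IsSpanningTree (G : SimpleGraph V) (T : Finset (Sym2 V)) : Prop :=
  (T : Set (Sym2 V)) ⊆ G.edgeSet ∧ (SimpleGraph.fromEdgeSet (T : Set (Sym2 V))).IsTree

/-- The finite set of all spanning trees of `G`. -/
noncomputable def spanningTrees (G : SimpleGraph V) : Finset (Finset (Sym2 V)) :=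
  Finset.univ.filter fun T => IsSpanningTree G T

/-- The relative resistance `r_e(c)` of an edge `e`. -/
noncomputable def relRes (G : SimpleGraph V) (c : Sym2 V → ℝ) (e : Sym2 V) : ℝ :=
  (∑ T ∈ (spanningTrees G).filter (fun T => e ∈ T), ∏ t ∈ T, c t) /
    (∑ T ∈ spanningTrees G, ∏ t ∈ T, c t)

/-- The resistance curvature `p_v(c)` of a vertex `v`. -/
noncomputable def curv (G : SimpleGraph V) (c : Sym2 V → ℝ) (v : V) : ℝ :=
  1 - (1 / 2) * ∑ u ∈ G.neighborFinset v, relRes G c s(u, v)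

/-- `G` is resistance nonnegative. -/
def IsRN (G : SimpleGraph V) : Prop :=
  ∃ c : Sym2 V → ℝ, (∀ e ∈ G.edgeSet, 0 < c e) ∧ ∀ v : V, 0 ≤ curv G c v

/-- `G` is resistance positive. -/
def IsRP (G : SimpleGraph V) : Prop :=
  ∃ c : Sym2 V → ℝ, (∀ e ∈ G.edgeSet, 0 < c e) ∧ ∀ v : V, 0 < curv G c v

/-- The indicator vector of a finite edge set, as a vector in `ℝ^{Sym2 V}`. -/
noncomputable def indVec (T : Finset (Sym2 V)) : Sym2 V → ℝ := fun e => if e ∈ T then 1 else 0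

/-- The spanning tree polytope `P(G)`. -/
noncomputable def stPolytope (G : SimpleGraph V) : Set (Sym2 V → ℝ) :=
  convexHull ℝ {x | ∃ T ∈ spanningTrees G, x = indVec T}

/-- `M` is a matching of `G`. -/
def IsMatching' (G : SimpleGraph V) (M : Finset (Sym2 V)) : Prop :=
  (M : Set (Sym2 V)) ⊆ G.edgeSet ∧ ∀ v : V, (M.filter fun e => v ∈ e).card ≤ 1

/-- The matching polytope `M(G)`. -/
noncomputable def matchingPolytope (G : SimpleGraph V) : Set (Sym2 V → ℝ) :=
  convexHull ℝ {x | ∃ M : Finset (Sym2 V), IsMatching' G M ∧ x = indVec M}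

/-- A Hamiltonian path: a spanning tree in which every vertex has degree at most `2`. -/
def IsHamPath (G : SimpleGraph V) (H : Finset (Sym2 V)) : Prop :=
  IsSpanningTree G H ∧ ∀ v : V, (H.filter fun e => v ∈ e).card ≤ 2

end RCurv

section Contraction

variable {V W : Type*} {G : SimpleGraph V}

theorem reachable_map_of_reachable (f : V → W) {u v : V} (h : G.Reachable u v) :
    (G.map f).Reachable (f u) (f v) := by
  rw [SimpleGraph.reachable_iff_reflTransGen] at h ⊢
  refine h.lift' f fun a b hab => ?_
  change Relation.ReflTransGen (G.map f).Adj (f a) (f b)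
  by_cases hf : f a = f b
  · rw [hf]
  · exact .single (SimpleGraph.map_adj_apply' hab hf)

theorem connected_map_of_surjective {f : V → W} (hf : Function.Surjective f)
    (hG : G.Connected) : (G.map f).Connected := by
  have : Nonempty W := hG.nonempty.map f
  exact ⟨hf.forall₂.2 fun u v => reachable_map_of_reachable f (hG u v)⟩

theorem edgeSet_map_connectedComponentMk_subset (G H : SimpleGraph V) :
    (G.map H.connectedComponentMk).edgeSet ⊆
      Sym2.map H.connectedComponentMk '' (G.edgeSet \ H.edgeSet) := by
  intro e he
  induction e with
  | h x y =>
    obtain ⟨hne, u, v, huv, rfl, rfl⟩ := he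
    have hnot : ¬ H.Adj u v := fun hH =>
      hne (SimpleGraph.ConnectedComponent.connectedComponentMk_eq_of_adj hH)
    exact ⟨s(u, v), ⟨huv, hnot⟩, rfl⟩

theorem card_connectedComponent_le_ncard_edgeSet_sdiff_add_one (hG : G.Connected)
    (H : SimpleGraph V) (hfin : (G.edgeSet \ H.edgeSet).Finite) :
    Nat.card H.ConnectedComponent ≤ (G.edgeSet \ H.edgeSet).ncard + 1 := by
  have hconn : (G.map H.connectedComponentMk).Connected :=
    connected_map_of_surjective Quot.mk_surjective hG
  calc Nat.card H.ConnectedComponent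
      ≤ (G.map H.connectedComponentMk).edgeSet.ncard + 1 :=
        hconn.card_vert_le_card_edgeSet_add_one
    _ ≤ (Sym2.map H.connectedComponentMk '' (G.edgeSet \ H.edgeSet)).ncard + 1 := by
        gcongr
        · exact hfin.image _
        · exact edgeSet_map_connectedComponentMk_subset G H
    _ ≤ (G.edgeSet \ H.edgeSet).ncard + 1 := by
        gcongr
        exact Set.ncard_image_le hfin

theorem ncard_edgeSet_inter_add_card_connectedComponent_le [Finite V] {T : SimpleGraph V}
    (hT : T.IsTree) (H : SimpleGraph V) :
    (H.edgeSet ∩ T.edgeSet).ncard + Nat.card H.ConnectedComponent ≤ Nat.card V := by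
  have htree : T.edgeSet.ncard + 1 = Nat.card V :=
    (SimpleGraph.isTree_iff_connected_and_card.1 hT).2
  have hsplit := Set.ncard_inter_add_ncard_sdiff_eq_ncard T.edgeSet H.edgeSet
  have hcontract := card_connectedComponent_le_ncard_edgeSet_sdiff_add_one hT.connected H
    (Set.toFinite _)
  rw [Set.inter_comm]
  omega

end Contraction

namespace RCurv

variable {V : Type*} [Fintype V] {G : SimpleGraph V} {c : Sym2 V → ℝ}

theorem mem_spanningTrees {T : Finset (Sym2 V)} :
    T ∈ spanningTrees G ↔ IsSpanningTree G T := by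
  simp [spanningTrees]

theorem prod_weight_nonneg (hc : ∀ e ∈ G.edgeSet, 0 ≤ c e) {T : Finset (Sym2 V)}
    (hT : T ∈ spanningTrees G) : 0 ≤ ∏ t ∈ T, c t :=
  Finset.prod_nonneg fun _ ht => hc _ ((mem_spanningTrees.1 hT).1 ht)

theorem spanningTrees_nonempty (hG : G.Connected) : (spanningTrees G).Nonempty := by
  obtain ⟨T, hTG, hT⟩ := hG.exists_isTree_le
  refine ⟨T.edgeFinset, mem_spanningTrees.2 ⟨?_, ?_⟩⟩
  · simpa using hTG
  · simpa using hT

theorem sum_prod_weight_pos (hG : G.Connected) (hc : ∀ e ∈ G.edgeSet, 0 < c e) :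
    0 < ∑ T ∈ spanningTrees G, ∏ t ∈ T, c t :=
  Finset.sum_pos
    (fun _ hT => Finset.prod_pos fun _ ht => hc _ ((mem_spanningTrees.1 hT).1 ht))
    (spanningTrees_nonempty hG)

variable [DecidableEq V]

theorem IsSpanningTree.card_inter_add_card_connectedComponent_le {T : Finset (Sym2 V)}
    (hT : IsSpanningTree G T) (A : Finset (Sym2 V)) :
    (A ∩ T).card + Nat.card (SimpleGraph.fromEdgeSet (A : Set (Sym2 V))).ConnectedComponent ≤
      Fintype.card V := by
  have hinter : (SimpleGraph.fromEdgeSet (A : Set (Sym2 V))).edgeSet ∩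
      (SimpleGraph.fromEdgeSet (T : Set (Sym2 V))).edgeSet = ↑(A ∩ T) := by
    ext e
    have hdiag : e ∈ T → ¬ e.IsDiag := fun he => G.not_isDiag_of_mem_edgeSet (hT.1 he)
    simp only [SimpleGraph.edgeSet_fromEdgeSet, Set.mem_inter_iff, Set.mem_sdiff, Finset.mem_coe,
      Sym2.mem_diagSet, Finset.mem_inter]
    tauto
  simpa only [hinter, Set.ncard_coe_finset, Nat.card_eq_fintype_card] using
    ncard_edgeSet_inter_add_card_connectedComponent_le hT.2
      (SimpleGraph.fromEdgeSet (A : Set (Sym2 V)))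

theorem relRes_nonneg (hc : ∀ e ∈ G.edgeSet, 0 ≤ c e) (e : Sym2 V) : 0 ≤ relRes G c e :=
  div_nonneg
    (Finset.sum_nonneg fun _ hT => prod_weight_nonneg hc (Finset.mem_filter.1 hT).1)
    (Finset.sum_nonneg fun _ hT => prod_weight_nonneg hc hT)

theorem sum_relRes_eq_sum_card_inter_div (G : SimpleGraph V) (c : Sym2 V → ℝ)
    (A : Finset (Sym2 V)) :
    ∑ e ∈ A, relRes G c e =
      (∑ T ∈ spanningTrees G, ((A ∩ T).card : ℝ) * ∏ t ∈ T, c t) /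
        ∑ T ∈ spanningTrees G, ∏ t ∈ T, c t := by
  simp only [relRes, ← Finset.sum_div, Finset.sum_filter]
  rw [Finset.sum_comm]
  simp only [Finset.sum_ite_mem, Finset.sum_const, nsmul_eq_mul]

end RCurv

open RCurv in
theorem relRes_sum_bounds_general {V : Type*} [Fintype V] [DecidableEq V]
    (G : SimpleGraph V) (A : Finset (Sym2 V)) (c : Sym2 V → ℝ) (hc : ∀ e ∈ G.edgeSet, 0 ≤ c e)
    (hpos : 0 < ∑ T ∈ spanningTrees G, ∏ t ∈ T, c t) :
    0 ≤ ∑ e ∈ A, relRes G c e ∧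
      ∑ e ∈ A, relRes G c e ≤
        (Fintype.card V : ℝ) -
          (Nat.card (SimpleGraph.fromEdgeSet (A : Set (Sym2 V))).ConnectedComponent : ℝ) := by
  refine ⟨Finset.sum_nonneg fun e _ => relRes_nonneg hc e, ?_⟩
  rw [sum_relRes_eq_sum_card_inter_div, div_le_iff₀ hpos, Finset.mul_sum]
  refine Finset.sum_le_sum fun T hT => mul_le_mul_of_nonneg_right ?_ (prod_weight_nonneg hc hT)
  rw [le_sub_iff_add_le]
  exact_mod_cast (mem_spanningTrees.1 hT).card_inter_add_card_connectedComponent_le A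

open RCurv in
/-- For any subset `A` of edges and positive edge weights, the relative resistances over `A`
sum to a value between `0` and `|V| - k(A)`, where `k(A)` is the number of connected
components of the spanning subgraph `(V, A)`. -/
theorem relRes_sum_bounds {V : Type*} [Fintype V] [DecidableEq V]
    (G : SimpleGraph V) (hG : G.Connected)
    (A : Finset (Sym2 V)) (hA : A ⊆ G.edgeFinset)
    (c : Sym2 V → ℝ) (hc : ∀ e ∈ G.edgeSet, 0 < c e) :
    0 ≤ ∑ e ∈ A, relRes G c e ∧
      ∑ e ∈ A, relRes G c e ≤
        (Fintype.card V : ℝ) -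
          (Nat.card (SimpleGraph.fromEdgeSet (A : Set (Sym2 V))).ConnectedComponent : ℝ) :=
  relRes_sum_bounds_general G A c (fun e he => (hc e he).le) (sum_prod_weight_pos hG hc)
end

section
/- Let G = (V, E) be a finite simple connected loopless graph with normalized edge weights 0 < c < ∞, resistance matrix Ω and inverse resistance matrix K = Ω⁻¹, and suppose the resistance curvature p_v(c) = 1 − (1/2) ∑_{u : uv ∈ E} c_{uv} ω_{uv} satisfies p_v(c) ≥ 0 for all v ∈ V. Then the resistance capacity τ_•(c) : 2^V → ℝ is submodular: τ_A(c) + τ_B(c) ≥ τ_{A∪B}(c) + τ_{A∩B}(c) for all A, B ⊆ V. -/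
open scoped Classical

namespace RCurv

variable {V : Type*} [Fintype V] [DecidableEq V]

/-- The weighted Laplacian matrix of `G` with edge weights `c`. -/
noncomputable def lapMat (G : SimpleGraph V) (c : Sym2 V → ℝ) : Matrix V V ℝ :=
  Matrix.of fun u v =>
    if u = v then ∑ w ∈ G.neighborFinset u, c s(u, w)
    else if G.Adj u v then -c s(u, v) else 0

/-- The all-ones matrix. -/
noncomputable def onesMat : Matrix V V ℝ := Matrix.of fun _ _ => (1 : ℝ)

/-- The Moore–Penrose pseudoinverse of the Laplacian, `(L + (1/n)J)⁻¹ - (1/n)J`. -/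
noncomputable def lapPinv (G : SimpleGraph V) (c : Sym2 V → ℝ) : Matrix V V ℝ :=
  (lapMat G c + ((Fintype.card V : ℝ))⁻¹ • onesMat)⁻¹ - ((Fintype.card V : ℝ))⁻¹ • onesMat

/-- The effective resistance between two vertices. -/
noncomputable def effRes (G : SimpleGraph V) (c : Sym2 V → ℝ) (u v : V) : ℝ :=
  lapPinv G c u u + lapPinv G c v v - 2 * lapPinv G c u v

/-- The resistance matrix `Ω` of `G`. -/
noncomputable def resMat (G : SimpleGraph V) (c : Sym2 V → ℝ) : Matrix V V ℝ :=
  Matrix.of fun u v => effRes G c u v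

/-- The resistance capacity `τ_U(c)` of a vertex subset `U`. -/
noncomputable def resCap (G : SimpleGraph V) (c : Sym2 V → ℝ) (U : Finset V) : ℝ :=
  if U.card = 0 then 0
  else if U.card = 1 then 1 / 2
  else 1 / 2 + (1 / 2) *
    (∑ u : {x // x ∈ U}, ∑ v : {x // x ∈ U},
      (((resMat G c).submatrix (fun a : {x // x ∈ U} => (a : V))
        (fun a : {x // x ∈ U} => (a : V)))⁻¹) u v)⁻¹

end RCurv

/-!
Write `L` for the Laplacian, `Ω` for the resistance matrix and `p` for the curvature. The Fiedler
identity `LΩ = 2(p 1ᵀ - I)` shows that `Ω` is negative definite on vectors of sum zero, so every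
nonempty `U` carries an equilibrium measure `x` of mass one whose potential `Ωx` is a constant
`κ_U` on `U`; then `τ_U = (1 + κ_U) / 2`, and the equilibrium measure of `V` is `p`. The normalized
potential `y = (Ωx - κ_U) / 2` vanishes on `U` and satisfies `Ly = p` off `U`. By the Dirichlet
principle it maximizes `Φ(y) = 2⟨y, p⟩ - ⟨y, Ly⟩` among the functions vanishing on `U`, with maximum
`(κ_V - κ_U) / 2`. For `p ≥ 0`, replacing `y` by `|y|` does not decrease `Φ`, and `Φ` is
supermodular for the pointwise `⊔` and `⊓`. If `y` and `z` are maximizers for `A` and `B`, then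
`|y| ⊔ |z|` vanishes on `A ∩ B` and `|y| ⊓ |z|` on `A ∪ B`, which gives the inequality unless
`A ∩ B = ∅`. In that case it follows from `1 / 2 ≤ τ_A`, `1 / 2 ≤ τ_B` and `τ_{A ∪ B} ≤ τ_V ≤ 1`.
-/

namespace RCurv

open Matrix

theorem dotProduct_extend {R ι κ : Type*} [NonUnitalNonAssocSemiring R] [Fintype ι] [Fintype κ]
    {f : ι → κ} (hf : f.Injective) (g : κ → R) (x : ι → R) :
    g ⬝ᵥ Function.extend f x 0 = (g ∘ f) ⬝ᵥ x := by
  refine (Fintype.sum_of_injective f hf _ _ (fun v hv => ?_) fun i => ?_).symm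
  · rw [Function.extend_apply' _ _ _ hv, Pi.zero_apply, mul_zero]
  · rw [hf.extend_apply, Function.comp_apply]

theorem sum_extend_zero {R ι κ : Type*} [NonAssocSemiring R] [Fintype ι] [Fintype κ]
    {f : ι → κ} (hf : f.Injective) (x : ι → R) :
    ∑ k, Function.extend f x 0 k = ∑ i, x i := by
  rw [← one_dotProduct, dotProduct_extend hf]
  exact one_dotProduct x

theorem dotProduct_mulVec_comm_of_isSymm {R ι : Type*} [CommSemiring R] [Fintype ι]
    {N : Matrix ι ι R} (hN : N.IsSymm) (x y : ι → R) : x ⬝ᵥ N *ᵥ y = y ⬝ᵥ N *ᵥ x := by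
  rw [dotProduct_mulVec, ← mulVec_transpose, hN.eq, dotProduct_comm]

section Equilibrium

variable {ι : Type*} [Fintype ι] {N : Matrix ι ι ℝ}

/-- A symmetric real matrix is strictly conditionally negative definite if its quadratic form is
negative on nonzero vectors of sum zero. Resistance matrices have this property. -/
structure IsStrictCondNegDef (N : Matrix ι ι ℝ) : Prop where
  isSymm : N.IsSymm
  neg : ∀ z : ι → ℝ, ∑ i, z i = 0 → z ≠ 0 → z ⬝ᵥ N *ᵥ z < 0

/-- The equilibrium value `(1ᵀ N⁻¹ 1)⁻¹`: the constant taken by `N *ᵥ x` when it is constant and `x`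
has sum one. For strictly conditionally negative definite `N` this includes singular `N`, whose
equilibrium value is indeed the junk value `0`. -/
noncomputable def equilibriumValue [DecidableEq ι] (N : Matrix ι ι ℝ) : ℝ :=
  (∑ i, ∑ j, N⁻¹ i j)⁻¹

/-- An equilibrium measure of `N`: a signed measure of mass one with constant potential `N *ᵥ x`. -/
structure IsEquilibrium [DecidableEq ι] (N : Matrix ι ι ℝ) (x : ι → ℝ) : Prop where
  sum_eq_one : ∑ i, x i = 1
  mulVec_eq : N *ᵥ x = equilibriumValue N • 1

theorem IsEquilibrium.dotProduct_mulVec_eq [DecidableEq ι] {x : ι → ℝ} (hx : IsEquilibrium N x)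
    {e : ι → ℝ} (he : ∑ i, e i = 1) : e ⬝ᵥ N *ᵥ x = equilibriumValue N := by
  rw [hx.mulVec_eq, dotProduct_smul, dotProduct_one, he, smul_eq_mul, mul_one]

namespace IsStrictCondNegDef

theorem sum_ne_zero (hN : IsStrictCondNegDef N) {x : ι → ℝ} (hx : x ≠ 0) {κ : ℝ}
    (hNx : N *ᵥ x = κ • 1) : ∑ i, x i ≠ 0 := by
  intro hsum
  have hneg := hN.neg x hsum hx
  rw [hNx, dotProduct_smul, dotProduct_one, hsum, smul_zero] at hneg
  exact hneg.false

theorem exists_isEquilibrium [DecidableEq ι] [Nonempty ι] (hN : IsStrictCondNegDef N) :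
    ∃ x, IsEquilibrium N x := by
  by_cases hdet : IsUnit N.det
  · have hNw : N *ᵥ (N⁻¹ *ᵥ 1) = (1 : ℝ) • 1 := by
      rw [mulVec_mulVec, mul_nonsing_inv _ hdet, one_mulVec, one_smul]
    have hw : N⁻¹ *ᵥ (1 : ι → ℝ) ≠ 0 := by
      intro h
      simp [h] at hNw
    have hsum : ∑ i, ∑ j, N⁻¹ i j = ∑ i, (N⁻¹ *ᵥ (1 : ι → ℝ)) i := by
      simp only [mulVec, dotProduct_one]
    refine ⟨equilibriumValue N • N⁻¹ *ᵥ 1, ?_, by rw [mulVec_smul, hNw, one_smul]⟩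
    simp only [Pi.smul_apply, smul_eq_mul, ← Finset.mul_sum, equilibriumValue, hsum]
    exact inv_mul_cancel₀ (hN.sum_ne_zero hw hNw)
  · obtain ⟨v, hv, hNv⟩ := exists_mulVec_eq_zero_iff.mpr (by simpa using hdet)
    have hvalue : equilibriumValue N = 0 := by
      simp [equilibriumValue, nonsing_inv_apply_not_isUnit _ hdet]
    refine ⟨(∑ i, v i)⁻¹ • v, ?_, by rw [mulVec_smul, hNv, hvalue, smul_zero, zero_smul]⟩
    simp only [Pi.smul_apply, smul_eq_mul, ← Finset.mul_sum]
    exact inv_mul_cancel₀ (hN.sum_ne_zero (κ := 0) hv (by rw [hNv, zero_smul]))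

theorem dotProduct_mulVec_le_equilibriumValue [DecidableEq ι] [Nonempty ι]
    (hN : IsStrictCondNegDef N) {e : ι → ℝ} (he : ∑ i, e i = 1) :
    e ⬝ᵥ N *ᵥ e ≤ equilibriumValue N := by
  obtain ⟨x, hx⟩ := hN.exists_isEquilibrium
  have hdiff : (e - x) ⬝ᵥ N *ᵥ (e - x) ≤ 0 := by
    rcases eq_or_ne (e - x) 0 with h | h
    · rw [h, zero_dotProduct]
    · exact (hN.neg _ (by simp [he, hx.sum_eq_one]) h).le
  rw [mulVec_sub, sub_dotProduct, dotProduct_sub, dotProduct_sub,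
    dotProduct_mulVec_comm_of_isSymm hN.isSymm x e, hx.dotProduct_mulVec_eq he,
    hx.dotProduct_mulVec_eq hx.sum_eq_one] at hdiff
  linarith

theorem diag_le_equilibriumValue [DecidableEq ι] (hN : IsStrictCondNegDef N) (i : ι) :
    N i i ≤ equilibriumValue N := by
  have : Nonempty ι := ⟨i⟩
  simpa using hN.dotProduct_mulVec_le_equilibriumValue (e := Pi.single i 1) (by simp)

theorem submatrix (hN : IsStrictCondNegDef N) {κ : Type*} [Fintype κ] {f : κ → ι}
    (hf : f.Injective) : IsStrictCondNegDef (N.submatrix f f) where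
  isSymm := hN.isSymm.submatrix f
  neg z hsum hz := by
    have hmulVec : (N *ᵥ Function.extend f z 0) ∘ f = N.submatrix f f *ᵥ z :=
      funext fun k => dotProduct_extend hf (N (f k)) z
    have hne : Function.extend f z 0 ≠ 0 := fun h =>
      hz (funext fun k => (hf.extend_apply z 0 k).symm.trans (congrFun h (f k)))
    have hneg := hN.neg _ ((sum_extend_zero hf z).trans hsum) hne
    rwa [dotProduct_comm, dotProduct_extend hf, hmulVec, dotProduct_comm] at hneg

theorem exists_isEquilibrium_on [DecidableEq ι] (hN : IsStrictCondNegDef N) {U : Finset ι}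
    (hU : U.Nonempty) :
    ∃ x : ι → ℝ, (∀ i ∉ U, x i = 0) ∧ ∑ i, x i = 1 ∧
      ∀ i ∈ U, (N *ᵥ x) i = equilibriumValue (N.submatrix (Subtype.val : U → ι) Subtype.val) := by
  have hval : (Subtype.val : U → ι).Injective := Subtype.val_injective
  have := hU.to_subtype
  obtain ⟨x, hx⟩ := (hN.submatrix hval).exists_isEquilibrium
  refine ⟨Function.extend Subtype.val x 0, fun i hi => ?_,
    (sum_extend_zero hval x).trans hx.sum_eq_one, fun i hi => ?_⟩
  · exact Function.extend_apply' _ _ _ (by simpa using hi)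
  · have hNx := congrFun hx.mulVec_eq ⟨i, hi⟩
    rw [Pi.smul_apply, Pi.one_apply, smul_eq_mul, mul_one] at hNx
    rw [← hNx]
    exact dotProduct_extend hval (N i) x

end IsStrictCondNegDef

end Equilibrium

section Laplacian

variable {V : Type*} [Fintype V] [DecidableEq V] {G : SimpleGraph V} {c : Sym2 V → ℝ}

theorem isSymm_lapMat (G : SimpleGraph V) (c : Sym2 V → ℝ) : (lapMat G c).IsSymm := by
  refine IsSymm.ext fun u v => ?_
  rcases eq_or_ne u v with rfl | huv
  · rfl
  · simp only [lapMat, of_apply, if_neg huv, if_neg huv.symm, G.adj_comm u v, Sym2.eq_swap]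

theorem lapMat_mulVec_apply (G : SimpleGraph V) (c : Sym2 V → ℝ) (y : V → ℝ) (u : V) :
    (lapMat G c *ᵥ y) u = ∑ v ∈ G.neighborFinset u, c s(u, v) * (y u - y v) := by
  have hentry (v : V) : lapMat G c u v * y v =
      (if u = v then (∑ w ∈ G.neighborFinset u, c s(u, w)) * y v else 0) -
        if G.Adj u v then c s(u, v) * y v else 0 := by
    rcases eq_or_ne u v with rfl | huv
    · simp [lapMat]
    · simp only [lapMat, of_apply, if_neg huv]
      split_ifs <;> ring
  simp only [mulVec, dotProduct, hentry, Finset.sum_sub_distrib, Finset.sum_ite_eq,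
    Finset.mem_univ, if_true, mul_sub, Finset.sum_mul, ← Finset.sum_filter,
    G.neighborFinset_eq_filter]

theorem dotProduct_lapMat_mulVec_self (G : SimpleGraph V) (c : Sym2 V → ℝ) (y : V → ℝ) :
    y ⬝ᵥ lapMat G c *ᵥ y =
      1 / 2 * ∑ u, ∑ v ∈ G.neighborFinset u, c s(u, v) * (y u - y v) ^ 2 := by
  have hform : y ⬝ᵥ lapMat G c *ᵥ y =
      ∑ u, ∑ v ∈ G.neighborFinset u, c s(u, v) * (y u * (y u - y v)) := by
    simp only [dotProduct, lapMat_mulVec_apply, Finset.mul_sum, mul_left_comm]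
  have hswap : y ⬝ᵥ lapMat G c *ᵥ y =
      ∑ u, ∑ v ∈ G.neighborFinset u, c s(u, v) * (y v * (y v - y u)) := by
    rw [hform, Finset.sum_comm' (t' := Finset.univ) (s' := fun v => G.neighborFinset v)
      (by simp [G.adj_comm])]
    simp only [Sym2.eq_swap]
  have hadd : y ⬝ᵥ lapMat G c *ᵥ y + y ⬝ᵥ lapMat G c *ᵥ y =
      ∑ u, ∑ v ∈ G.neighborFinset u, c s(u, v) * (y u - y v) ^ 2 := by
    nth_rw 1 [hform]
    rw [hswap]
    simp only [← Finset.sum_add_distrib]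
    refine Finset.sum_congr rfl fun u _ => Finset.sum_congr rfl fun v _ => by ring
  linarith

theorem dotProduct_lapMat_mulVec_self_add_le (hc : ∀ e ∈ G.edgeSet, 0 ≤ c e)
    {y₁ y₂ z₁ z₂ : V → ℝ}
    (h : ∀ u v, (y₁ u - y₁ v) ^ 2 + (y₂ u - y₂ v) ^ 2 ≤ (z₁ u - z₁ v) ^ 2 + (z₂ u - z₂ v) ^ 2) :
    y₁ ⬝ᵥ lapMat G c *ᵥ y₁ + y₂ ⬝ᵥ lapMat G c *ᵥ y₂ ≤
      z₁ ⬝ᵥ lapMat G c *ᵥ z₁ + z₂ ⬝ᵥ lapMat G c *ᵥ z₂ := by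
  simp only [dotProduct_lapMat_mulVec_self, ← mul_add, ← Finset.sum_add_distrib]
  gcongr 1 / 2 * ∑ u, ∑ v ∈ _, ?_ with u _ v hv
  exact mul_le_mul_of_nonneg_left (h u v) (hc _ (by simpa using hv))

theorem posSemidef_lapMat (hc : ∀ e ∈ G.edgeSet, 0 ≤ c e) : (lapMat G c).PosSemidef := by
  refine .of_dotProduct_mulVec_nonneg (isSymm_lapMat G c) fun y => ?_
  rw [star_trivial, dotProduct_lapMat_mulVec_self]
  refine mul_nonneg (by norm_num) (Finset.sum_nonneg fun u _ => Finset.sum_nonneg fun v hv => ?_)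
  exact mul_nonneg (hc _ (by simpa using hv)) (sq_nonneg _)

theorem lapMat_mulVec_one (G : SimpleGraph V) (c : Sym2 V → ℝ) : lapMat G c *ᵥ 1 = 0 := by
  ext u
  simp [lapMat_mulVec_apply]

theorem eq_of_lapMat_mulVec_eq_zero (hG : G.Connected) (hc : ∀ e ∈ G.edgeSet, 0 < c e)
    {y : V → ℝ} (hy : lapMat G c *ᵥ y = 0) (u v : V) : y u = y v := by
  have hterm (u v : V) (huv : v ∈ G.neighborFinset u) : 0 ≤ c s(u, v) * (y u - y v) ^ 2 :=
    mul_nonneg (hc _ (by simpa using huv)).le (sq_nonneg _)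
  have hsum : ∑ u, ∑ v ∈ G.neighborFinset u, c s(u, v) * (y u - y v) ^ 2 = 0 := by
    simpa [hy] using (dotProduct_lapMat_mulVec_self G c y).symm
  have hadj {a b : V} (hab : G.Adj a b) : y a = y b := by
    have ha := (Finset.sum_eq_zero_iff_of_nonneg fun u _ => Finset.sum_nonneg (hterm u)).mp hsum a
      (Finset.mem_univ a)
    have hb := (Finset.sum_eq_zero_iff_of_nonneg (hterm a)).mp ha b (by simpa using hab)
    simpa [(hc s(a, b) (by simpa using hab)).ne', sub_eq_zero] using hb
  obtain ⟨walk⟩ := hG.preconnected u v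
  induction walk with
  | nil => rfl
  | cons hab _ ih => exact (hadj hab).trans ih

end Laplacian

section Pseudoinverse

variable {V : Type*} [Fintype V] [DecidableEq V] {G : SimpleGraph V} {c : Sym2 V → ℝ}

theorem onesMat_mulVec {ι : Type*} [Fintype ι] (y : ι → ℝ) :
    onesMat *ᵥ y = (∑ u, y u) • (1 : ι → ℝ) := by
  ext u
  simp [onesMat, mulVec, dotProduct]

theorem onesMat_mul_lapMat (G : SimpleGraph V) (c : Sym2 V → ℝ) : onesMat * lapMat G c = 0 := by
  ext u v
  have h := congrFun (lapMat_mulVec_one G c) v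
  rw [mulVec, dotProduct_one] at h
  simp only [mul_apply, onesMat, of_apply, one_mul, (isSymm_lapMat G c).apply v, h, Pi.zero_apply,
    Matrix.zero_apply]

theorem lapMat_mul_onesMat (G : SimpleGraph V) (c : Sym2 V → ℝ) : lapMat G c * onesMat = 0 := by
  rw [← (isSymm_lapMat G c).eq, ← transpose_transpose onesMat, ← transpose_mul]
  exact congrArg transpose (onesMat_mul_lapMat G c)

theorem onesMat_mul_lapMat_add_onesMat [Nonempty V] (G : SimpleGraph V) (c : Sym2 V → ℝ) :
    onesMat * (lapMat G c + (Fintype.card V : ℝ)⁻¹ • onesMat) = onesMat := by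
  rw [mul_add, onesMat_mul_lapMat, zero_add, mul_smul_comm]
  ext u v
  simp [onesMat, mul_apply]

theorem isUnit_det_lapMat_add_onesMat (hG : G.Connected) (hc : ∀ e ∈ G.edgeSet, 0 < c e) :
    IsUnit (lapMat G c + (Fintype.card V : ℝ)⁻¹ • onesMat).det := by
  have := hG.nonempty
  rw [isUnit_iff_ne_zero, ne_eq, ← exists_mulVec_eq_zero_iff]
  rintro ⟨y, hy, hMy⟩
  have hJy : onesMat *ᵥ y = 0 := by
    rw [← onesMat_mul_lapMat_add_onesMat G c, ← mulVec_mulVec, hMy, mulVec_zero]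
  have hLy : lapMat G c *ᵥ y = 0 := by
    rwa [add_mulVec, smul_mulVec, hJy, smul_zero, add_zero] at hMy
  refine hy (funext fun u => ?_)
  have hsum := congrFun hJy u
  simpa [onesMat_mulVec, eq_of_lapMat_mulVec_eq_zero hG hc hLy _ u] using hsum

theorem lapMat_mul_lapPinv (hG : G.Connected) (hc : ∀ e ∈ G.edgeSet, 0 < c e) :
    lapMat G c * lapPinv G c = 1 - (Fintype.card V : ℝ)⁻¹ • onesMat := by
  have := hG.nonempty
  have hdet := isUnit_det_lapMat_add_onesMat hG hc
  have hJ := onesMat_mul_lapMat_add_onesMat G c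
  have hdef : lapPinv G c = (lapMat G c + (Fintype.card V : ℝ)⁻¹ • onesMat)⁻¹ -
    (Fintype.card V : ℝ)⁻¹ • onesMat := rfl
  set J : Matrix V V ℝ := (Fintype.card V : ℝ)⁻¹ • onesMat with hJdef
  set M := lapMat G c + J
  have hJM : J * M⁻¹ = J := by
    rw [hJdef, smul_mul_assoc, ← hJ, mul_assoc, mul_nonsing_inv _ hdet, mul_one, hJ]
  calc lapMat G c * lapPinv G c = lapMat G c * M⁻¹ := by
        rw [hdef, mul_sub, hJdef, mul_smul_comm, lapMat_mul_onesMat, smul_zero, sub_zero]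
    _ = (M - J) * M⁻¹ := by rw [add_sub_cancel_right]
    _ = 1 - J := by rw [sub_mul, mul_nonsing_inv _ hdet, hJM]

theorem isSymm_lapPinv (G : SimpleGraph V) (c : Sym2 V → ℝ) : (lapPinv G c).IsSymm := by
  have hJ : (onesMat (V := V)).IsSymm := IsSymm.ext fun _ _ => rfl
  rw [IsSymm, lapPinv, transpose_sub, transpose_nonsing_inv, transpose_add, transpose_smul, hJ.eq,
    (isSymm_lapMat G c).eq]

end Pseudoinverse

section Resistance

variable {V : Type*} [Fintype V] [DecidableEq V] {G : SimpleGraph V} {c : Sym2 V → ℝ}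

theorem isSymm_resMat (G : SimpleGraph V) (c : Sym2 V → ℝ) : (resMat G c).IsSymm := by
  refine IsSymm.ext fun u v => ?_
  simp only [resMat, of_apply, effRes, (isSymm_lapPinv G c).apply u v]
  ring

theorem resMat_self (G : SimpleGraph V) (c : Sym2 V → ℝ) (v : V) : resMat G c v v = 0 := by
  simp only [resMat, of_apply, effRes]
  ring

/-- The resistance curvature `p_v(c)`, written with effective resistances instead of the
spanning-tree sums of `curv`. -/
noncomputable def resCurvature (G : SimpleGraph V) (c : Sym2 V → ℝ) (v : V) : ℝ :=
  1 - (1 / 2) * ∑ u ∈ G.neighborFinset v, c s(u, v) * effRes G c u v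

theorem lapMat_mul_resMat_self (G : SimpleGraph V) (c : Sym2 V → ℝ) (v : V) :
    (lapMat G c * resMat G c) v v = 2 * resCurvature G c v - 2 := by
  have hcol : (lapMat G c * resMat G c) v v = (lapMat G c *ᵥ fun u => resMat G c u v) v := rfl
  rw [hcol, lapMat_mulVec_apply]
  simp only [resMat_self, zero_sub, mul_neg, Finset.sum_neg_distrib, Sym2.eq_swap (a := v)]
  simp only [resMat, of_apply, resCurvature]
  ring

theorem lapMat_mul_resMat_apply (G : SimpleGraph V) (c : Sym2 V → ℝ) (u v : V) :
    (lapMat G c * resMat G c) u v = (lapMat G c *ᵥ (lapPinv G c).diag) u -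
      2 * (lapMat G c * lapPinv G c) u v := by
  have hcol : (fun w => resMat G c w v) =
      (lapPinv G c).diag + lapPinv G c v v • 1 - (2 : ℝ) • fun w => lapPinv G c w v := by
    ext w
    simp [resMat, effRes]
  calc (lapMat G c * resMat G c) u v = (lapMat G c *ᵥ fun w => resMat G c w v) u := rfl
    _ = _ := by
      rw [hcol, mulVec_sub, mulVec_add, mulVec_smul, mulVec_smul, lapMat_mulVec_one, smul_zero,
        add_zero]
      rfl

theorem lapMat_mul_resMat (hG : G.Connected) (hc : ∀ e ∈ G.edgeSet, 0 < c e) :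
    lapMat G c * resMat G c = (2 : ℝ) • (vecMulVec (resCurvature G c) 1 - 1) := by
  ext u v
  -- `LΩ + 2I` has constant rows, so it is determined by its diagonal.
  have hrow (w : V) : (lapMat G c * resMat G c) u w =
      (lapMat G c *ᵥ (lapPinv G c).diag) u -
        2 * ((1 : Matrix V V ℝ) u w - (Fintype.card V : ℝ)⁻¹) := by
    rw [lapMat_mul_resMat_apply, lapMat_mul_lapPinv hG hc]
    simp [onesMat]
  have hdiag := lapMat_mul_resMat_self G c u
  rw [hrow, one_apply_eq] at hdiag
  rw [hrow, Matrix.smul_apply, Matrix.sub_apply, vecMulVec_apply, Pi.one_apply, smul_eq_mul]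
  linarith

theorem lapMat_mulVec_resMat_mulVec (hG : G.Connected) (hc : ∀ e ∈ G.edgeSet, 0 < c e)
    (x : V → ℝ) :
    lapMat G c *ᵥ (resMat G c *ᵥ x) = (2 : ℝ) • ((∑ v, x v) • resCurvature G c - x) := by
  rw [mulVec_mulVec, lapMat_mul_resMat hG hc, smul_mulVec, sub_mulVec, vecMulVec_mulVec,
    one_mulVec, one_dotProduct, op_smul_eq_smul]

theorem isStrictCondNegDef_resMat (hG : G.Connected) (hc : ∀ e ∈ G.edgeSet, 0 < c e) :
    IsStrictCondNegDef (resMat G c) where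
  isSymm := isSymm_resMat G c
  neg z hsum hz := by
    have hL := posSemidef_lapMat fun e he => (hc e he).le
    have hLΩz : lapMat G c *ᵥ (resMat G c *ᵥ z) = (-2 : ℝ) • z := by
      rw [lapMat_mulVec_resMat_mulVec hG hc, hsum, zero_smul, zero_sub, smul_neg, neg_smul]
    have henergy : (resMat G c *ᵥ z) ⬝ᵥ lapMat G c *ᵥ (resMat G c *ᵥ z) =
        -2 * (z ⬝ᵥ resMat G c *ᵥ z) := by
      rw [hLΩz, dotProduct_smul, smul_eq_mul, dotProduct_comm]
    have hnonneg := hL.dotProduct_mulVec_nonneg (resMat G c *ᵥ z)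
    rw [star_trivial, henergy] at hnonneg
    refine lt_of_le_of_ne (by linarith) fun hzero => hz ?_
    rw [hzero, mul_zero] at henergy
    have hker := (hL.dotProduct_mulVec_zero_iff (resMat G c *ᵥ z)).mp (by rwa [star_trivial])
    simpa [hLΩz] using hker

theorem isEquilibrium_resCurvature (hG : G.Connected) (hc : ∀ e ∈ G.edgeSet, 0 < c e) :
    IsEquilibrium (resMat G c) (resCurvature G c) := by
  have := hG.nonempty
  obtain ⟨x, hx⟩ := (isStrictCondNegDef_resMat hG hc).exists_isEquilibrium
  have hFiedler := lapMat_mulVec_resMat_mulVec hG hc x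
  rw [hx.mulVec_eq, mulVec_smul, lapMat_mulVec_one, smul_zero, hx.sum_eq_one, one_smul, eq_comm,
    smul_eq_zero_iff_right two_ne_zero, sub_eq_zero] at hFiedler
  rwa [hFiedler]

theorem resCap_eq (G : SimpleGraph V) (c : Sym2 V → ℝ) {U : Finset V} (hU : U.Nonempty) :
    resCap G c U = (1 + equilibriumValue
      ((resMat G c).submatrix (Subtype.val : U → V) Subtype.val)) / 2 := by
  rw [resCap, if_neg hU.card_ne_zero]
  split_ifs with hcard
  · obtain ⟨v, rfl⟩ := Finset.card_eq_one.mp hcard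
    simp [equilibriumValue, inv_subsingleton, resMat_self]
  · rw [equilibriumValue]
    ring

theorem half_le_resCap (hG : G.Connected) (hc : ∀ e ∈ G.edgeSet, 0 < c e) {U : Finset V}
    (hU : U.Nonempty) : 1 / 2 ≤ resCap G c U := by
  obtain ⟨v, hv⟩ := id hU
  have hvalue := ((isStrictCondNegDef_resMat hG hc).submatrix
    Subtype.val_injective).diag_le_equilibriumValue (⟨v, hv⟩ : U)
  rw [submatrix_apply, resMat_self] at hvalue
  rw [resCap_eq G c hU]
  linarith

end Resistance

section Dirichlet

variable {V : Type*} [Fintype V] [DecidableEq V] {G : SimpleGraph V} {c : Sym2 V → ℝ}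

/-- The functional `Φ(y) = 2⟨y, q⟩ - ⟨y, Ly⟩` with source `q`, whose maximizers under the boundary
condition `y = 0` on `U` solve the Dirichlet problem `Ly = q` off `U`. -/
noncomputable def dirichletFunctional (G : SimpleGraph V) (c : Sym2 V → ℝ) (q y : V → ℝ) : ℝ :=
  2 * (y ⬝ᵥ q) - y ⬝ᵥ lapMat G c *ᵥ y

theorem dirichletFunctional_le_abs (hc : ∀ e ∈ G.edgeSet, 0 ≤ c e) {q : V → ℝ} (hq : 0 ≤ q)
    (y : V → ℝ) : dirichletFunctional G c q y ≤ dirichletFunctional G c q |y| := by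
  have hlin : y ⬝ᵥ q ≤ |y| ⬝ᵥ q := dotProduct_le_dotProduct_of_nonneg_right (le_abs_self y) hq
  have hquad := dotProduct_lapMat_mulVec_self_add_le (G := G) hc (y₁ := |y|) (y₂ := 0) (z₁ := y)
    (z₂ := 0) fun u v => by
      simpa using sq_le_sq.mpr (abs_abs_sub_abs_le (y u) (y v))
  simp only [zero_dotProduct, add_zero] at hquad
  unfold dirichletFunctional
  linarith

theorem sq_sup_sub_sup_add_sq_inf_sub_inf_le {R : Type*} [CommRing R] [LinearOrder R]
    [IsStrictOrderedRing R] (a b a' b' : R) :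
    (a ⊔ b - a' ⊔ b') ^ 2 + (a ⊓ b - a' ⊓ b') ^ 2 ≤ (a - a') ^ 2 + (b - b') ^ 2 := by
  rcases le_total a b with h | h <;> rcases le_total a' b' with h' | h' <;>
    simp only [sup_of_le_left, sup_of_le_right, inf_of_le_left, inf_of_le_right, h, h'] <;>
    nlinarith [mul_nonneg (sub_nonneg.2 h) (sub_nonneg.2 h')]

theorem dirichletFunctional_supermodular (hc : ∀ e ∈ G.edgeSet, 0 ≤ c e) (q y z : V → ℝ) :
    dirichletFunctional G c q y + dirichletFunctional G c q z ≤
      dirichletFunctional G c q (y ⊔ z) + dirichletFunctional G c q (y ⊓ z) := by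
  have hlin : (y ⊔ z) ⬝ᵥ q + (y ⊓ z) ⬝ᵥ q = y ⬝ᵥ q + z ⬝ᵥ q := by
    rw [← add_dotProduct, ← add_dotProduct, add_comm (y ⊔ z), inf_add_sup]
  have hquad := dotProduct_lapMat_mulVec_self_add_le (G := G) hc (y₁ := y ⊔ z) (y₂ := y ⊓ z)
    fun u v => sq_sup_sub_sup_add_sq_inf_sub_inf_le (y u) (z u) (y v) (z v)
  unfold dirichletFunctional
  linarith

theorem isGreatest_dirichletFunctional (hc : ∀ e ∈ G.edgeSet, 0 ≤ c e) {q y : V → ℝ}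
    {U : Finset V} (hyU : ∀ u ∈ U, y u = 0)
    (hyL : ∀ t : V → ℝ, (∀ u ∈ U, t u = 0) → t ⬝ᵥ lapMat G c *ᵥ y = t ⬝ᵥ q) :
    IsGreatest (dirichletFunctional G c q '' {t | ∀ u ∈ U, t u = 0}) (y ⬝ᵥ q) := by
  refine ⟨⟨y, hyU, by rw [dirichletFunctional, hyL y hyU]; ring⟩, ?_⟩
  rintro _ ⟨t, htU, rfl⟩
  have hsq := (posSemidef_lapMat hc).dotProduct_mulVec_nonneg (t - y)
  rw [star_trivial, mulVec_sub, sub_dotProduct, dotProduct_sub, dotProduct_sub,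
    dotProduct_mulVec_comm_of_isSymm (isSymm_lapMat G c) y t, hyL t htU, hyL y hyU] at hsq
  unfold dirichletFunctional
  linarith

theorem isGreatest_dirichletFunctional_supermodular (hc : ∀ e ∈ G.edgeSet, 0 ≤ c e)
    {q : V → ℝ} (hq : 0 ≤ q) {A B : Finset V} {a b m M : ℝ}
    (ha : IsGreatest (dirichletFunctional G c q '' {t | ∀ u ∈ A, t u = 0}) a)
    (hb : IsGreatest (dirichletFunctional G c q '' {t | ∀ u ∈ B, t u = 0}) b)
    (hm : IsGreatest (dirichletFunctional G c q '' {t | ∀ u ∈ A ∪ B, t u = 0}) m)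
    (hM : IsGreatest (dirichletFunctional G c q '' {t | ∀ u ∈ A ∩ B, t u = 0}) M) :
    a + b ≤ m + M := by
  obtain ⟨⟨y, hyA, rfl⟩, -⟩ := ha
  obtain ⟨⟨z, hzB, rfl⟩, -⟩ := hb
  have hsup : dirichletFunctional G c q (|y| ⊔ |z|) ≤ M := hM.2 ⟨_, fun u hu => by
    rw [Finset.mem_inter] at hu
    simp [hyA u hu.1, hzB u hu.2], rfl⟩
  have hinf : dirichletFunctional G c q (|y| ⊓ |z|) ≤ m := hm.2 ⟨_, fun u hu => by
    rcases Finset.mem_union.mp hu with h | h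
    · simp [hyA u h]
    · simp [hzB u h], rfl⟩
  linarith [dirichletFunctional_le_abs hc hq y, dirichletFunctional_le_abs hc hq z,
    dirichletFunctional_supermodular hc q |y| |z|]

theorem isGreatest_dirichletFunctional_resCurvature (hG : G.Connected)
    (hc : ∀ e ∈ G.edgeSet, 0 < c e) {U : Finset V} (hU : U.Nonempty) :
    IsGreatest (dirichletFunctional G c (resCurvature G c) '' {t | ∀ u ∈ U, t u = 0})
      ((1 + equilibriumValue (resMat G c)) / 2 - resCap G c U) := by
  have hp := isEquilibrium_resCurvature hG hc
  obtain ⟨x, hxU, hxsum, hΩx⟩ := (isStrictCondNegDef_resMat hG hc).exists_isEquilibrium_on hU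
  rw [resCap_eq G c hU]
  set κ := equilibriumValue ((resMat G c).submatrix (Subtype.val : U → V) Subtype.val)
  set y : V → ℝ := (1 / 2 : ℝ) • (resMat G c *ᵥ x - κ • 1) with hy
  have hLy : lapMat G c *ᵥ y = resCurvature G c - x := by
    rw [hy, mulVec_smul, mulVec_sub, mulVec_smul, lapMat_mulVec_one,
      lapMat_mulVec_resMat_mulVec hG hc, hxsum, one_smul, smul_zero, sub_zero, smul_smul]
    norm_num
  have hyp : y ⬝ᵥ resCurvature G c = (1 + equilibriumValue (resMat G c)) / 2 - (1 + κ) / 2 := by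
    rw [dotProduct_comm, hy, dotProduct_smul, dotProduct_sub, dotProduct_smul, dotProduct_one,
      hp.sum_eq_one, dotProduct_mulVec_comm_of_isSymm (isSymm_resMat G c),
      hp.dotProduct_mulVec_eq hxsum]
    simp only [smul_eq_mul]
    ring
  rw [← hyp]
  refine isGreatest_dirichletFunctional (fun e he => (hc e he).le)
    (fun u hu => by simp [hy, hΩx u hu]) fun t htU => ?_
  have htx : t ⬝ᵥ x = 0 := Finset.sum_eq_zero fun u _ => by
    by_cases hu : u ∈ U
    · rw [htU u hu, zero_mul]
    · rw [hxU u hu, mul_zero]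
  rw [hLy, dotProduct_sub, htx, sub_zero]

theorem resCap_le (hG : G.Connected) (hc : ∀ e ∈ G.edgeSet, 0 < c e) {U : Finset V}
    (hU : U.Nonempty) : resCap G c U ≤ (1 + equilibriumValue (resMat G c)) / 2 := by
  have h := (isGreatest_dirichletFunctional_resCurvature hG hc hU).2 ⟨0, by simp, rfl⟩
  simp only [dirichletFunctional, zero_dotProduct] at h
  linarith

theorem resCap_submodular_of_inter_nonempty (hG : G.Connected) (hc : ∀ e ∈ G.edgeSet, 0 < c e)
    (hp : 0 ≤ resCurvature G c) {A B : Finset V} (hAB : (A ∩ B).Nonempty) :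
    resCap G c (A ∪ B) + resCap G c (A ∩ B) ≤ resCap G c A + resCap G c B := by
  have hA := hAB.mono Finset.inter_subset_left
  have hB := hAB.mono Finset.inter_subset_right
  have h := isGreatest_dirichletFunctional_supermodular (fun e he => (hc e he).le) hp
    (isGreatest_dirichletFunctional_resCurvature hG hc hA)
    (isGreatest_dirichletFunctional_resCurvature hG hc hB)
    (isGreatest_dirichletFunctional_resCurvature hG hc (hA.mono Finset.subset_union_left))
    (isGreatest_dirichletFunctional_resCurvature hG hc hAB)
  linarith

end Dirichlet

theorem resCap_submodular_of_nonneg_curvature_general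
    {V : Type*} [Fintype V] [DecidableEq V]
    (G : SimpleGraph V) (hG : G.Connected)
    (c : Sym2 V → ℝ) (hc : ∀ e ∈ G.edgeSet, 0 < c e)
    (hnorm : 1 ≤ ∑ u : V, ∑ v : V, ((resMat G c)⁻¹) u v)
    (hcurv : ∀ v : V,
      0 ≤ 1 - (1 / 2) * ∑ u ∈ G.neighborFinset v, c s(u, v) * effRes G c u v) :
    ∀ A B : Finset V,
      resCap G c (A ∪ B) + resCap G c (A ∩ B) ≤ resCap G c A + resCap G c B := by
  intro A B
  have hempty : resCap G c ∅ = 0 := by simp [resCap]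
  rcases A.eq_empty_or_nonempty with rfl | hA
  · simp [hempty]
  rcases B.eq_empty_or_nonempty with rfl | hB
  · simp [hempty]
  rcases (A ∩ B).eq_empty_or_nonempty with hAB | hAB
  · have hunion := resCap_le hG hc (hA.mono (Finset.subset_union_left (s₂ := B)))
    have hvalue : equilibriumValue (resMat G c) ≤ 1 := inv_le_one_of_one_le₀ hnorm
    rw [hAB, hempty]
    linarith [half_le_resCap hG hc hA, half_le_resCap hG hc hB]
  · exact resCap_submodular_of_inter_nonempty hG hc hcurv hAB

end RCurv

open RCurv in
/-- For a normalized connected weighted graph with nonnegative resistance curvature, the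
resistance capacity is a submodular set function. -/
theorem resCap_submodular_of_nonneg_curvature
    {V : Type*} [Fintype V] [DecidableEq V]
    (G : SimpleGraph V) (hG : G.Connected)
    (c : Sym2 V → ℝ) (hc : ∀ e ∈ G.edgeSet, 0 < c e)
    (hnorm : ∑ u : V, ∑ v : V, ((resMat G c)⁻¹) u v = 1)
    (hcurv : ∀ v : V,
      0 ≤ 1 - (1 / 2) * ∑ u ∈ G.neighborFinset v, c s(u, v) * effRes G c u v) :
    ∀ A B : Finset V,
      resCap G c (A ∪ B) + resCap G c (A ∩ B) ≤ resCap G c A + resCap G c B :=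
  resCap_submodular_of_nonneg_curvature_general G hG c hc hnorm.ge hcurv
end
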